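/- arXiv:1608.00510 — 4 statements merged into one kernel-verified Lean document; each statement's English description precedes it below -/
import Mathlib

section
/- Let W₁ be a group, τ a group automorphism of W₁, and r ≥ 1. Let δ be the automorphism of the direct power W₁^r (functions Fin r → W₁ with pointwise multiplication) defined by (δ w)(i) = w(i+1) for i < r − 1 and (δ w)(r − 1) = τ(w(0)). For a group H with automorphism σ, say u, v ∈ H are σ-twisted conjugate if there exists x ∈ H with v = x * u * (σ x)⁻¹; this is an equivalence relation. Then the map sending w ∈ W₁^r to the product w(0) * w(1) * ⋯ * w(r − 1) induces a well-defined bijection from the set of δ-twisted conjugacy classes of W₁^r onto the set of τ-twisted conjugacy classes of W₁. -/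
/-- `u` and `v` are `σ`-twisted conjugate if `v = x * u * (σ x)⁻¹` for some `x`. -/
def TwistedConj {H : Type*} [Group H] (σ : H → H) (u v : H) : Prop :=
  ∃ x : H, v = x * u * (σ x)⁻¹

/-!
Put `y i = x i` for `i < r` and `y r = τ (x 0)`. Then `v = x * u * (δ x)⁻¹` says
`v i = y i * u i * (y (i + 1))⁻¹` for every `i < r`, and these equations telescope to
`v 0 ⋯ v (i - 1) = y 0 * (u 0 ⋯ u (i - 1)) * (y i)⁻¹`. For `i = r` this says that `x 0` twists the
product of `u` into the product of `v`; conversely, for given `y 0` the telescoped equations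
determine `y`, and the one for `i = r` is the boundary condition `y r = τ (y 0)`.
-/

open Function

theorem TwistedConj.equivalence {G : Type*} [Group G] (σ : G →* G) :
    Equivalence (TwistedConj σ) where
  refl u := ⟨1, by simp⟩
  symm := by
    rintro u _ ⟨x, rfl⟩
    exact ⟨x⁻¹, by simp [mul_assoc]⟩
  trans := by
    rintro u _ _ ⟨x, rfl⟩ ⟨y, rfl⟩
    exact ⟨y * x, by simp [mul_assoc]⟩

theorem quot_map_bijective {α β : Type*} {r : α → α → Prop} {s : β → β → Prop} {f : α → β}
    (hs : Equivalence s) (hrs : ∀ a b, r a b ↔ s (f a) (f b)) (hf : Surjective f) :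
    Bijective (Quot.map f fun a b => (hrs a b).1 : Quot r → Quot s) := by
  refine ⟨?_, Quot.map_surjective _ hf⟩
  rintro ⟨a⟩ ⟨b⟩ hab
  exact Quot.sound ((hrs a b).2 ((hs.quot_mk_eq_iff _ _).1 hab))

section Products

variable {M : Type*} [Monoid M] {n : ℕ}

theorem partialProd_last (w : Fin n → M) : Fin.partialProd w (Fin.last n) = (List.ofFn w).prod := by
  simp [Fin.partialProd, List.take_of_length_le]

theorem prod_ofFn_surjective [NeZero n] : Surjective fun w : Fin n → M => (List.ofFn w).prod := by
  obtain ⟨m, rfl⟩ := Nat.exists_eq_succ_of_ne_zero (NeZero.ne n)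
  exact fun g => ⟨Fin.cons g 1, by simp⟩

end Products

section Telescoping

variable {G : Type*} [Group G] {n : ℕ}

theorem partialProd_telescope (y : Fin (n + 1) → G) (w : Fin n → G) (j : Fin (n + 1)) :
    Fin.partialProd (fun i => y i.castSucc * w i * (y i.succ)⁻¹) j =
      y 0 * Fin.partialProd w j * (y j)⁻¹ := by
  induction j using Fin.induction with
  | zero => simp
  | succ i ih =>
    rw [Fin.partialProd_succ, Fin.partialProd_succ, ih]
    group

theorem exists_telescope_iff (R : G → G → Prop) (u v : Fin n → G) :
    (∃ y : Fin (n + 1) → G,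
        R (y 0) (y (Fin.last n)) ∧ ∀ i, v i = y i.castSucc * u i * (y i.succ)⁻¹) ↔
      ∃ a b, R a b ∧ (List.ofFn v).prod = a * (List.ofFn u).prod * b⁻¹ := by
  simp only [← partialProd_last]
  constructor
  · rintro ⟨y, hR, hv⟩
    obtain rfl := funext hv
    exact ⟨y 0, y (Fin.last n), hR, partialProd_telescope y u (Fin.last n)⟩
  · rintro ⟨a, b, hR, hprod⟩
    let y : Fin (n + 1) → G := fun j => (Fin.partialProd v j)⁻¹ * a * Fin.partialProd u j
    have y_zero : y 0 = a := by simp [y]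
    have y_last : y (Fin.last n) = b := by
      simp only [y, hprod]
      group
    refine ⟨y, by rwa [y_zero, y_last], fun i => ?_⟩
    simp only [y, Fin.partialProd_succ]
    group

end Telescoping

section CyclicTwist

variable {G : Type*} {n : ℕ} [NeZero n]

/-- The self-map `(x 0, …, x (n - 1)) ↦ (x 1, …, x (n - 1), τ (x 0))` of the `n`-th power of `G`,
encoded by appending `τ (x 0)` to the tuple and dropping the first entry. -/
def cyclicTwist (τ : G → G) (x : Fin n → G) : Fin n → G :=
  Fin.tail (Fin.snoc x (τ (x 0)) : Fin (n + 1) → G)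

theorem cyclicTwist_apply (τ : G → G) (x : Fin n → G) (i : Fin n) :
    cyclicTwist τ x i = if h : (i : ℕ) + 1 < n then x ⟨i + 1, h⟩ else τ (x 0) :=
  rfl

variable [Group G]

theorem twistedConj_cyclicTwist_iff_exists (τ : G → G) (u v : Fin n → G) :
    TwistedConj (cyclicTwist τ) u v ↔
      ∃ y : Fin (n + 1) → G,
        y (Fin.last n) = τ (y 0) ∧ ∀ i, v i = y i.castSucc * u i * (y i.succ)⁻¹ := by
  constructor
  · rintro ⟨x, rfl⟩
    refine ⟨Fin.snoc x (τ (x 0)), by simp only [Fin.snoc_last, Fin.snoc_apply_zero], fun i => ?_⟩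
    rw [Fin.snoc_castSucc]
    rfl
  · rintro ⟨y, hlast, hv⟩
    have hsnoc : Fin.snoc (Fin.init y) (τ (y 0)) = y := hlast ▸ Fin.snoc_init_self y
    refine ⟨Fin.init y, funext fun i => ?_⟩
    have htwist : cyclicTwist τ (Fin.init y) i = y i.succ := congrFun hsnoc i.succ
    simp only [Pi.mul_apply, Pi.inv_apply, htwist, hv, Fin.init]

theorem twistedConj_cyclicTwist_iff (τ : G → G) (u v : Fin n → G) :
    TwistedConj (cyclicTwist τ) u v ↔
      TwistedConj τ (List.ofFn u).prod (List.ofFn v).prod := by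
  rw [twistedConj_cyclicTwist_iff_exists, exists_telescope_iff (fun a b => b = τ a)]
  simp only [exists_eq_left, TwistedConj]

end CyclicTwist

theorem stmt_1_general {W₁ : Type*} [Group W₁] (τ : W₁ →* W₁) (r : ℕ) (hr : 1 ≤ r)
    (δ : (Fin r → W₁) → (Fin r → W₁))
    (hδ : ∀ (w : Fin r → W₁) (i : Fin r),
      δ w i = if h : (i : ℕ) + 1 < r then w ⟨(i : ℕ) + 1, h⟩ else τ (w ⟨0, hr⟩)) :
    Equivalence (TwistedConj δ) ∧ Equivalence (TwistedConj τ) ∧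
    ∃ e : Quot (TwistedConj δ) ≃ Quot (TwistedConj τ),
      ∀ w : Fin r → W₁, e (Quot.mk _ w) = Quot.mk _ (List.ofFn w).prod := by
  have : NeZero r := .of_pos hr
  obtain rfl : δ = cyclicTwist τ := by
    ext w i
    rw [hδ, cyclicTwist_apply]
    rfl
  have hτ := TwistedConj.equivalence τ
  have hprod := twistedConj_cyclicTwist_iff (n := r) τ
  have hδτ : TwistedConj (cyclicTwist τ) =
      (TwistedConj τ on fun w : Fin r → W₁ => (List.ofFn w).prod) :=
    funext₂ fun u v => propext (hprod u v)
  exact ⟨hδτ ▸ hτ.comap _, hτ,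
    .ofBijective _ (quot_map_bijective hτ hprod prod_ofFn_surjective), fun _ => rfl⟩

/-- Twisted conjugacy classes of a direct power, with cyclically permuting twisting,
biject with twisted conjugacy classes of the single factor, via the product map. -/
theorem stmt_1 {W₁ : Type*} [Group W₁] (τ : W₁ ≃* W₁) (r : ℕ) (hr : 1 ≤ r)
    (δ : (Fin r → W₁) ≃* (Fin r → W₁))
    (hδ : ∀ (w : Fin r → W₁) (i : Fin r),
      δ w i = if h : (i : ℕ) + 1 < r then w ⟨(i : ℕ) + 1, h⟩ else τ (w ⟨0, by omega⟩)) :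
    Equivalence (TwistedConj (δ : (Fin r → W₁) → (Fin r → W₁))) ∧
    Equivalence (TwistedConj (τ : W₁ → W₁)) ∧
    ∃ e : Quot (TwistedConj (δ : (Fin r → W₁) → (Fin r → W₁))) ≃
        Quot (TwistedConj (τ : W₁ → W₁)),
      ∀ w : Fin r → W₁, e (Quot.mk _ w) = Quot.mk _ (List.ofFn w).prod :=
  stmt_1_general (τ : W₁ →* W₁) r hr δ hδ
end

section
/- Let F be a field, n ≥ 1, and let g ∈ SL(n, F) be a monomial matrix whose permutation σ is an n-cycle (a cycle whose support is all of Fin n). Then g^n = (−1)^{n+1} • 1. Moreover, if char F ≠ 2, then the order of g equals n when n is odd and equals 2n when n is even. -/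
open Matrix

/-- A matrix is monomial with permutation `σ` if its nonzero entries are exactly the
entries `(σ j, j)`, each of which is a unit. -/
def IsMonomial {n : Type*} [Fintype n] [DecidableEq n] {F : Type*} [Field F]
    (g : Matrix n n F) (σ : Equiv.Perm n) : Prop :=
  ∃ c : n → Fˣ, ∀ i j, g i j = if i = σ j then (c j : F) else 0

/-!
The `n`-th power of a monomial matrix whose permutation is an `n`-cycle is the scalar given by the
product of its nonzero entries. That product is `sign σ * det g`, which is `(-1) ^ (n + 1)` on `SL`.
If a power of `g` is the identity, so is that power of its permutation; hence `n` divides the order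
of `g`, which is therefore `n` times the order of the scalar `(-1) ^ (n + 1)`.
-/

section CycleOn

variable {ι : Type*} {σ : Equiv.Perm ι}

theorem prod_range_card_pow_apply_of_isCycleOn {M : Type*} [CommMonoid M] {s : Finset ι}
    (hσ : σ.IsCycleOn (s : Set ι)) {a : ι} (ha : a ∈ s) (f : ι → M) :
    ∏ t ∈ Finset.range s.card, f ((σ ^ t) a) = ∏ i ∈ s, f i := by
  refine Finset.prod_bij (fun t _ => (σ ^ t) a) (fun t _ => ?maps_to) ?injective ?surjective
    fun _ _ => rfl
  case maps_to => exact (hσ.1.perm_pow t).mapsTo ha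
  case injective =>
    intro t ht u hu htu
    exact ((hσ.pow_apply_eq_pow_apply ha).1 htu).eq_of_lt_of_lt
      (Finset.mem_range.1 ht) (Finset.mem_range.1 hu)
  case surjective =>
    intro b hb
    obtain ⟨t, ht, hσt⟩ := hσ.exists_pow_eq ha hb
    exact ⟨t, Finset.mem_range.2 ht, hσt⟩

variable [Fintype ι]

theorem pow_card_eq_one_of_isCycleOn_univ (hσ : σ.IsCycleOn Set.univ) : σ ^ Fintype.card ι = 1 := by
  rw [← Finset.coe_univ] at hσ
  exact Equiv.ext fun a => hσ.pow_card_apply (Finset.mem_univ a)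

theorem card_dvd_orderOf_of_isCycleOn_univ [Nonempty ι] (hσ : σ.IsCycleOn Set.univ) :
    Fintype.card ι ∣ orderOf σ := by
  rw [← Finset.coe_univ] at hσ
  obtain ⟨a⟩ := ‹Nonempty ι›
  exact (hσ.pow_apply_eq (Finset.mem_univ a)).1 (by rw [pow_orderOf_eq_one, Equiv.Perm.one_apply])

theorem sign_eq_neg_one_pow_of_isCycleOn_univ [DecidableEq ι] [Nonempty ι]
    (hσ : σ.IsCycleOn Set.univ) : Equiv.Perm.sign σ = (-1) ^ (Fintype.card ι + 1) := by
  cases subsingleton_or_nontrivial ι with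
  | inl _ =>
    have hcard : Fintype.card ι = 1 :=
      le_antisymm (Fintype.card_le_one_iff_subsingleton.2 ‹_›) Fintype.card_pos
    simp [Subsingleton.elim σ 1, hcard]
  | inr _ =>
    have hcycle : σ.IsCycle :=
      Equiv.Perm.isCycle_iff_exists_isCycleOn.2
        ⟨_, Set.nontrivial_univ, hσ, fun _ _ => Set.mem_univ _⟩
    have hsupport : σ.support = Finset.univ := Finset.eq_univ_of_forall fun i =>
      Equiv.Perm.mem_support.2 (hσ.apply_ne Set.nontrivial_univ (Set.mem_univ i))
    rw [hcycle.sign, hsupport, Finset.card_univ, pow_succ, mul_neg_one]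

end CycleOn

section MonomialMatrix

variable {ι R : Type*} [DecidableEq ι]

/-- The monomial matrix with permutation `σ` and coefficients `c`: it sends the basis vector `e j`
to `c j • e (σ j)`. The coefficients need not be units. -/
def monomialMatrix [Zero R] (σ : Equiv.Perm ι) (c : ι → R) : Matrix ι ι R :=
  of fun i j => if i = σ j then c j else 0

theorem monomialMatrix_apply [Zero R] (σ : Equiv.Perm ι) (c : ι → R) (i j : ι) :
    monomialMatrix σ c i j = if i = σ j then c j else 0 :=
  rfl

theorem monomialMatrix_one [Zero R] (c : ι → R) : monomialMatrix 1 c = diagonal c := by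
  ext i j
  by_cases hij : i = j <;> simp [monomialMatrix_apply, hij]

theorem perm_eq_one_of_monomialMatrix_eq_one [Zero R] [One R] [NeZero (1 : R)]
    {σ : Equiv.Perm ι} {c : ι → R} (h : monomialMatrix σ c = 1) : σ = 1 := by
  refine Equiv.ext fun j => ?_
  by_contra hj
  have hdiag : monomialMatrix σ c j j = 1 := by rw [h, one_apply_eq]
  have hne : j ≠ σ j := Ne.symm hj
  rw [monomialMatrix_apply, if_neg hne] at hdiag
  exact zero_ne_one hdiag

variable [Fintype ι]

theorem monomialMatrix_mul [NonUnitalNonAssocSemiring R] (σ τ : Equiv.Perm ι) (c d : ι → R) :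
    monomialMatrix σ c * monomialMatrix τ d = monomialMatrix (σ * τ) fun j => c (τ j) * d j := by
  ext i j
  simp only [mul_apply, monomialMatrix_apply, mul_ite, mul_zero, ite_mul, zero_mul,
    Finset.sum_ite_eq', Finset.mem_univ, if_true]
  rfl

section CommSemiring

variable [CommSemiring R]

theorem monomialMatrix_pow (σ : Equiv.Perm ι) (c : ι → R) (k : ℕ) :
    monomialMatrix σ c ^ k =
      monomialMatrix (σ ^ k) fun j => ∏ t ∈ Finset.range k, c ((σ ^ t) j) := by
  induction k with
  | zero => simp [monomialMatrix_one]
  | succ k ih =>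
    simp only [pow_succ', ih, monomialMatrix_mul, Finset.prod_range_succ, mul_comm]

theorem orderOf_perm_dvd_orderOf_monomialMatrix [Nontrivial R] (σ : Equiv.Perm ι) (c : ι → R) :
    orderOf σ ∣ orderOf (monomialMatrix σ c) := by
  have hpow := pow_orderOf_eq_one (monomialMatrix σ c)
  rw [monomialMatrix_pow] at hpow
  exact orderOf_dvd_of_pow_eq_one (perm_eq_one_of_monomialMatrix_eq_one hpow)

theorem monomialMatrix_pow_card_of_isCycleOn_univ {σ : Equiv.Perm ι}
    (hσ : σ.IsCycleOn Set.univ) (c : ι → R) :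
    monomialMatrix σ c ^ Fintype.card ι = scalar ι (∏ i, c i) := by
  rw [monomialMatrix_pow, pow_card_eq_one_of_isCycleOn_univ hσ, monomialMatrix_one, scalar_apply]
  rw [← Finset.coe_univ] at hσ
  congr 1 with j
  exact prod_range_card_pow_apply_of_isCycleOn hσ (Finset.mem_univ j) c

theorem orderOf_monomialMatrix_of_isCycleOn_univ [Nontrivial R] [Nonempty ι] {σ : Equiv.Perm ι}
    (hσ : σ.IsCycleOn Set.univ) (c : ι → R) :
    orderOf (monomialMatrix σ c) = Fintype.card ι * orderOf (∏ i, c i) := by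
  have hdvd : Fintype.card ι ∣ orderOf (monomialMatrix σ c) :=
    (card_dvd_orderOf_of_isCycleOn_univ hσ).trans (orderOf_perm_dvd_orderOf_monomialMatrix σ c)
  have hscalar : orderOf (scalar ι (∏ i, c i)) = orderOf (∏ i, c i) :=
    orderOf_injective (scalar ι : R →+* Matrix ι ι R).toMonoidHom (fun _ _ => scalar_inj.1) _
  rw [← hscalar, ← monomialMatrix_pow_card_of_isCycleOn_univ hσ,
    orderOf_pow_of_dvd Fintype.card_ne_zero hdvd, Nat.mul_div_cancel' hdvd]

end CommSemiring

section CommRing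

variable [CommRing R]

theorem det_monomialMatrix (σ : Equiv.Perm ι) (c : ι → R) :
    (monomialMatrix σ c).det = Equiv.Perm.sign σ * ∏ i, c i := by
  have hsubmatrix : monomialMatrix σ c = (diagonal c).submatrix σ.symm id := by
    ext i j
    by_cases hij : i = σ j <;> simp [monomialMatrix_apply, Equiv.symm_apply_eq, hij]
  rw [hsubmatrix, det_permute, det_diagonal, Equiv.Perm.sign_symm]

theorem prod_eq_neg_one_pow_mul_det_monomialMatrix [Nonempty ι] {σ : Equiv.Perm ι}
    (hσ : σ.IsCycleOn Set.univ) (c : ι → R) :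
    ∏ i, c i = (-1) ^ (Fintype.card ι + 1) * (monomialMatrix σ c).det := by
  rw [det_monomialMatrix, sign_eq_neg_one_pow_of_isCycleOn_univ hσ]
  push_cast
  rw [← mul_assoc, ← mul_pow, neg_one_mul, neg_neg, one_pow, one_mul]

end CommRing

end MonomialMatrix

theorem orderOf_neg_one_pow_add_one {R : Type*} [Ring R] [Nontrivial R] (n : ℕ) :
    orderOf ((-1 : R) ^ (n + 1)) = if Odd n ∨ ringChar R = 2 then 1 else 2 := by
  by_cases hn : Odd n
  · simp [hn, hn.add_one.neg_one_pow]
  · simp [hn, (Nat.not_odd_iff_even.1 hn).add_one.neg_one_pow, orderOf_neg_one]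

theorem stmt_3_general {R ι : Type*} [CommRing R] [Nontrivial R] [Fintype ι] [DecidableEq ι]
    [Nonempty ι] (g : Matrix.SpecialLinearGroup ι R) (σ : Equiv.Perm ι) (c : ι → R)
    (hg : (g : Matrix ι ι R) = monomialMatrix σ c) (hσ : σ.IsCycleOn Set.univ) :
    (↑(g ^ Fintype.card ι) : Matrix ι ι R) = (-1 : R) ^ (Fintype.card ι + 1) • 1 ∧
      orderOf g =
        if Odd (Fintype.card ι) ∨ ringChar R = 2 then Fintype.card ι
        else 2 * Fintype.card ι := by
  have hprod : ∏ i, c i = (-1) ^ (Fintype.card ι + 1) := by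
    rw [prod_eq_neg_one_pow_mul_det_monomialMatrix hσ, ← hg, g.det_coe, mul_one]
  have horder : orderOf g = orderOf (g : Matrix ι ι R) :=
    (orderOf_injective Matrix.SpecialLinearGroup.coeMonoidHom
      Matrix.SpecialLinearGroup.coeMonoidHom_injective g).symm
  constructor
  · refine (Matrix.SpecialLinearGroup.coe_pow g _).trans ?_
    rw [hg, monomialMatrix_pow_card_of_isCycleOn_univ hσ, hprod, scalar_apply,
      smul_one_eq_diagonal]
  · rw [horder, hg, orderOf_monomialMatrix_of_isCycleOn_univ hσ, hprod,
      orderOf_neg_one_pow_add_one, mul_ite, mul_one, mul_comm _ 2]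

/-- A monomial matrix in `SL(n,F)` whose permutation is an `n`-cycle satisfies
`g ^ n = (-1)^(n+1) • 1`; if moreover `char F ≠ 2` its order is `n` for `n` odd and
`2n` for `n` even. -/
theorem stmt_3 (F : Type*) [Field F] (n : ℕ) (hn : 1 ≤ n)
    (g : Matrix.SpecialLinearGroup (Fin n) F) (σ : Equiv.Perm (Fin n))
    (hmon : IsMonomial (g : Matrix (Fin n) (Fin n) F) σ)
    (hcyc : σ.IsCycleOn Set.univ) :
    (↑(g ^ n) : Matrix (Fin n) (Fin n) F) = (-1 : F) ^ (n + 1) • 1 ∧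
      (ringChar F ≠ 2 → orderOf g = if Odd n then n else 2 * n) := by
  obtain ⟨c, hc⟩ := hmon
  have : NeZero n := ⟨Nat.one_le_iff_ne_zero.1 hn⟩
  have h := stmt_3_general g σ (fun j => (c j : F)) (Matrix.ext hc) hcyc
  rw [Fintype.card_fin] at h
  exact ⟨h.1, fun hchar => by simpa only [hchar, or_false] using h.2⟩
end

section
/- Let F be a field, m ≥ 2, and S the m × m antidiagonal matrix over F (entries S i j = 1 if i + j = m − 1 and 0 otherwise, with indices 0, …, m − 1). Let g ∈ GL(m, F) be a monomial matrix with gᵀ * S * g = S, let σ be its permutation, and suppose every orbit of σ on the index set {0, …, m − 1} is invariant under the involution τ : i ↦ m − 1 − i. Then g^{k} = 1, where k is the order of the permutation σ. -/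
open Matrix

/-- The `m × m` antidiagonal matrix, the Gram matrix of the split symmetric form. -/
def antidiagMat (m : ℕ) (F : Type*) [Field F] : Matrix (Fin m) (Fin m) F :=
  Matrix.of fun i j => if (i : ℕ) + (j : ℕ) = m - 1 then 1 else 0

/-!
A monomial isometry `g` of a symmetric monomial form with permutation `τ` has a permutation `σ`
commuting with `τ`. On a `τ`-invariant cycle of length `2h`, moved by `τ`, the involution acts as
`σ ^ h`; thus `g ^ h` exchanges the lines through `e i` and `e (τ i)`, with scalars `a` and `b`.
Since `g ^ h` preserves the pairing of `e i` with `e (τ i)`, and the form is symmetric, `a * b = 1`,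
that is, `g ^ (2 * h)` fixes `e i`. A point fixed by `τ` is fixed by `σ`, and the same computation
with `h = 1` applies to it, the order of `σ` being even because of the other cycles.
-/

section Involution

variable {α : Type*} [Finite α] {σ τ : Equiv.Perm α}

lemma exists_pow_apply_eq_and_two_mul_eq_period (hστ : Commute σ τ)
    (hτ : Function.Involutive τ) {x : α} (hx : τ x ≠ x) (hcycle : σ.SameCycle x (τ x)) :
    ∃ h, (σ ^ h) x = τ x ∧ 2 * h = MulAction.period σ x := by
  obtain ⟨n, hn⟩ := hcycle.exists_nat_pow_eq
  set p := MulAction.period σ x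
  have hp : 0 < p := MulAction.period_pos_of_orderOf_pos (orderOf_pos σ) x
  have hmod : (σ ^ (n % p)) x = τ x :=
    (MulAction.pow_mod_period_smul n (m := σ) (a := x)).trans hn
  have hne : n % p ≠ 0 := fun h0 ↦ hx (by rw [← hmod, h0, pow_zero, Equiv.Perm.one_apply])
  have hdvd : p ∣ 2 * (n % p) := by
    rw [← MulAction.pow_smul_eq_iff_period_dvd, Equiv.Perm.smul_def]
    calc (σ ^ (2 * (n % p))) x = (σ ^ (n % p)) (τ x) := by
          rw [two_mul, pow_add, Equiv.Perm.mul_apply, hmod]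
      _ = τ ((σ ^ (n % p)) x) := DFunLike.congr_fun (hστ.pow_left (n % p)).eq x
      _ = x := by rw [hmod, hτ x]
  refine ⟨n % p, hmod, Nat.eq_of_dvd_of_lt_two_mul (by positivity) hdvd ?_⟩
  have := Nat.mod_lt n hp
  lia

lemma exists_pow_apply_eq_and_two_mul_dvd_orderOf [Nontrivial α] (hστ : Commute σ τ)
    (hτ : Function.Involutive τ) (hfix : (Function.fixedPoints τ).Subsingleton)
    (hcycle : ∀ x, σ.SameCycle x (τ x)) (x : α) :
    ∃ h, (σ ^ h) x = τ x ∧ 2 * h ∣ orderOf σ := by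
  have hmoved (y : α) (hy : τ y ≠ y) : ∃ h, (σ ^ h) y = τ y ∧ 2 * h ∣ orderOf σ := by
    obtain ⟨h, hh, hperiod⟩ := exists_pow_apply_eq_and_two_mul_eq_period hστ hτ hy (hcycle y)
    exact ⟨h, hh, hperiod ▸ MulAction.period_dvd_orderOf σ y⟩
  by_cases hx : τ x = x
  · have hτσ : τ (σ x) = σ x := (DFunLike.congr_fun hστ.eq x).symm.trans (congrArg σ hx)
    have hσx : σ x = x := hfix hτσ hx
    obtain ⟨y, hyx⟩ := exists_ne x
    obtain ⟨h, -, hdvd⟩ := hmoved y fun hy ↦ hyx (hfix hy hx)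
    exact ⟨1, by rw [pow_one, hσx, hx], (Dvd.intro h rfl).trans hdvd⟩
  · exact hmoved x hx

end Involution

section Matrix

variable {n R : Type*} [Fintype n] [DecidableEq n]

lemma pow_mulVec_eq_self [Semiring R] {g : Matrix n n R} {v : n → R} (hv : g *ᵥ v = v)
    (k : ℕ) : (g ^ k) *ᵥ v = v := by
  induction k with
  | zero => rw [pow_zero, one_mulVec]
  | succ k ih => rw [pow_succ, ← mulVec_mulVec, hv, ih]

lemma transpose_pow_mul_mul_pow [CommSemiring R] {g S : Matrix n n R} (hgS : gᵀ * S * g = S)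
    (k : ℕ) : (g ^ k)ᵀ * S * g ^ k = S := by
  induction k with
  | zero => simp
  | succ k ih =>
    calc (g ^ (k + 1))ᵀ * S * g ^ (k + 1) = (g ^ k)ᵀ * (gᵀ * S * g) * g ^ k := by
          simp only [pow_succ', transpose_mul, Matrix.mul_assoc]
      _ = S := by rw [hgS, ih]

end Matrix

section Monomial

variable {n F : Type*} [Fintype n] [DecidableEq n] [Field F] {g h S : Matrix n n F}
  {σ τ : Equiv.Perm n}

lemma isMonomial_iff_apply_ne_zero : IsMonomial g σ ↔ ∀ i j, g i j ≠ 0 ↔ i = σ j := by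
  constructor
  · rintro ⟨c, hc⟩ i j
    simp [hc]
  · intro hg
    refine ⟨fun j ↦ Units.mk0 (g (σ j) j) ((hg _ _).2 rfl), fun i j ↦ ?_⟩
    split_ifs with hij
    · rw [hij, Units.val_mk0]
    · exact not_not.1 (mt (hg i j).1 hij)

namespace IsMonomial

lemma apply_ne_zero_iff (hg : IsMonomial g σ) {i j : n} : g i j ≠ 0 ↔ i = σ j :=
  isMonomial_iff_apply_ne_zero.1 hg i j

lemma apply_eq_zero (hg : IsMonomial g σ) {i j : n} (hij : i ≠ σ j) : g i j = 0 :=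
  not_not.1 (mt hg.apply_ne_zero_iff.1 hij)

lemma perm_unique (hσ : IsMonomial g σ) (hτ : IsMonomial g τ) : σ = τ :=
  Equiv.ext fun _ ↦ hτ.apply_ne_zero_iff.1 (hσ.apply_ne_zero_iff.2 rfl)

lemma transpose (hg : IsMonomial g σ) : IsMonomial gᵀ σ⁻¹ :=
  isMonomial_iff_apply_ne_zero.2 fun i j ↦ by
    rw [transpose_apply, hg.apply_ne_zero_iff, Equiv.Perm.eq_inv_iff_eq, eq_comm]

lemma mul_apply (hh : IsMonomial h τ) (g : Matrix n n F) (i j : n) :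
    (g * h) i j = g i (τ j) * h (τ j) j := by
  rw [Matrix.mul_apply]
  exact Fintype.sum_eq_single _ fun k hk ↦ by rw [hh.apply_eq_zero hk, mul_zero]

lemma mul (hg : IsMonomial g σ) (hh : IsMonomial h τ) : IsMonomial (g * h) (σ * τ) :=
  isMonomial_iff_apply_ne_zero.2 fun i j ↦ by
    rw [hh.mul_apply, mul_ne_zero_iff_right (hh.apply_ne_zero_iff.2 rfl), hg.apply_ne_zero_iff,
      Equiv.Perm.mul_apply]

lemma one : IsMonomial (1 : Matrix n n F) 1 :=
  isMonomial_iff_apply_ne_zero.2 fun i j ↦ by simp [one_apply]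

lemma pow (hg : IsMonomial g σ) (k : ℕ) : IsMonomial (g ^ k) (σ ^ k) := by
  induction k with
  | zero => exact one
  | succ k ih => exact pow_succ g k ▸ pow_succ σ k ▸ ih.mul hg

lemma mulVec_single (hg : IsMonomial g σ) (j : n) (a : F) :
    g *ᵥ Pi.single j a = Pi.single (σ j) (g (σ j) j * a) := by
  ext i
  rw [Matrix.mulVec_single]
  obtain rfl | hi := eq_or_ne i (σ j)
  · simp
  · simp [hg.apply_eq_zero hi, hi]

lemma involutive_of_isSymm (hS : IsMonomial S τ) (hsymm : S.IsSymm) : Function.Involutive τ := by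
  have hinv : τ⁻¹ = τ := hS.transpose.perm_unique (hsymm.symm ▸ hS)
  intro i
  rw [← Equiv.Perm.eq_inv_iff_eq, hinv]

lemma commute_of_transpose_mul_mul_eq (hg : IsMonomial g σ) (hS : IsMonomial S τ)
    (hgS : gᵀ * S * g = S) : Commute σ τ := by
  have hconj : σ⁻¹ * τ * σ = τ := ((hg.transpose.mul hS).mul hg).perm_unique (hgS.symm ▸ hS)
  rw [mul_assoc, inv_mul_eq_iff_eq_mul] at hconj
  exact hconj.symm

lemma transpose_mul_mul_apply (hg : IsMonomial g σ) (S : Matrix n n F) (i j : n) :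
    (gᵀ * S * g) i j = g (σ i) i * S (σ i) (σ j) * g (σ j) j := by
  rw [hg.mul_apply, ← transpose_apply (gᵀ * S), transpose_mul, transpose_transpose, hg.mul_apply,
    transpose_apply, mul_comm (S _ _)]

lemma sq_mulVec_single (hg : IsMonomial g σ) (hS : IsMonomial S τ) (hsymm : S.IsSymm)
    (hgS : gᵀ * S * g = S) {i : n} (hi : σ i = τ i) :
    (g ^ 2) *ᵥ Pi.single i 1 = Pi.single i 1 := by
  have hτ : τ (τ i) = i := hS.involutive_of_isSymm hsymm i
  have hσ : σ (τ i) = i :=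
    calc σ (τ i) = τ (σ i) :=
          DFunLike.congr_fun (hg.commute_of_transpose_mul_mul_eq hS hgS).eq i
      _ = i := by rw [hi, hτ]
  have hpair : g (τ i) i * S (τ i) i * g i (τ i) = S (τ i) i := by
    have h := hg.transpose_mul_mul_apply S i (τ i)
    rwa [hgS, hσ, hi, ← hsymm.apply i (τ i), eq_comm] at h
  have hscalar : g i (τ i) * g (τ i) i = 1 :=
    mul_right_cancel₀ (hS.apply_ne_zero_iff.2 rfl : S (τ i) i ≠ 0) (by linear_combination hpair)
  rw [pow_two, ← mulVec_mulVec, hg.mulVec_single, hg.mulVec_single, hi, hσ, mul_one, hscalar]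

end IsMonomial

end Monomial

section Antidiagonal

variable (m : ℕ) (F : Type*) [Field F]

lemma isMonomial_antidiagMat : IsMonomial (antidiagMat m F) Fin.revPerm :=
  isMonomial_iff_apply_ne_zero.2 fun i j ↦ by
    simp only [antidiagMat, of_apply, ne_eq, ite_eq_right_iff, one_ne_zero, imp_false, not_not,
      Fin.revPerm_apply, Fin.ext_iff, Fin.val_rev]
    lia

lemma isSymm_antidiagMat : (antidiagMat m F).IsSymm := by
  ext i j
  simp only [antidiagMat, transpose_apply, of_apply, add_comm]

lemma subsingleton_fixedPoints_revPerm :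
    (Function.fixedPoints (Fin.revPerm : Equiv.Perm (Fin m))).Subsingleton := by
  intro i hi j hj
  simp only [Function.mem_fixedPoints_iff, Fin.revPerm_apply, Fin.ext_iff, Fin.val_rev] at hi hj
  lia

end Antidiagonal

theorem stmt_9_general {n F : Type*} [Fintype n] [DecidableEq n] [Nontrivial n] [Field F]
    {g S : Matrix n n F} {σ τ : Equiv.Perm n} (hg : IsMonomial g σ) (hS : IsMonomial S τ)
    (hsymm : S.IsSymm) (hgS : gᵀ * S * g = S) (hfix : (Function.fixedPoints τ).Subsingleton)
    (hcycle : ∀ i, σ.SameCycle i (τ i)) : g ^ orderOf σ = 1 := by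
  refine ext_of_mulVec_single fun i ↦ ?_
  obtain ⟨k, hk, l, hl⟩ := exists_pow_apply_eq_and_two_mul_dvd_orderOf
    (hg.commute_of_transpose_mul_mul_eq hS hgS) (hS.involutive_of_isSymm hsymm) hfix hcycle i
  have hfixed : (g ^ (2 * k)) *ᵥ Pi.single i 1 = Pi.single i 1 := by
    rw [mul_comm, pow_mul]
    exact (hg.pow k).sq_mulVec_single hS hsymm (transpose_pow_mul_mul_pow hgS k) hk
  rw [hl, pow_mul, pow_mulVec_eq_self hfixed, one_mulVec]

/-- A monomial matrix preserving the split symmetric form, all of whose permutation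
orbits are invariant under `i ↦ m - 1 - i`, satisfies `g ^ k = 1` where `k` is the
order of its permutation. -/
theorem stmt_9 (F : Type*) [Field F] (m : ℕ) (hm : 2 ≤ m)
    (g : GL (Fin m) F) (σ : Equiv.Perm (Fin m))
    (hmon : IsMonomial (g : Matrix (Fin m) (Fin m) F) σ)
    (hS : (g : Matrix (Fin m) (Fin m) F)ᵀ * antidiagMat m F * (g : Matrix (Fin m) (Fin m) F) =
      antidiagMat m F)
    (hτ : ∀ i : Fin m, σ.SameCycle i i.rev) :
    g ^ orderOf σ = 1 := by
  have : Nontrivial (Fin m) := Fin.nontrivial_iff_two_le.2 hm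
  exact Units.ext <| stmt_9_general hmon (isMonomial_antidiagMat m F) (isSymm_antidiagMat m F) hS
    (subsingleton_fixedPoints_revPerm m) hτ
end

section
/- Let F be an infinite field and n ≥ 1. Let T be the subgroup of diagonal matrices lying in Sp(2n, F), and suppose g ∈ Sp(2n, F) satisfies g * t * g⁻¹ = t⁻¹ for every t ∈ T. Then g² = −1; in particular, if char F ≠ 2, every such g has order 4. -/
open Matrix

private lemma isDiag_mul' {n F : Type*} [Fintype n] [DecidableEq n] [Field F]
    {A B : Matrix n n F} (hA : A.IsDiag) (hB : B.IsDiag) : (A * B).IsDiag := by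
  intro i j hij
  rw [Matrix.mul_apply]
  apply Finset.sum_eq_zero
  intro k _
  rcases eq_or_ne i k with rfl | h
  · rw [hB hij, mul_zero]
  · rw [hA h, zero_mul]

private lemma isDiag_of_mul_eq_one {n F : Type*} [Fintype n] [DecidableEq n] [Field F]
    {A B : Matrix n n F} (hA : A.IsDiag) (h : A * B = 1) : B.IsDiag := by
  intro i j hij
  have key : ∀ j', (A * B) i j' = A i i * B i j' := by
    intro j'
    rw [Matrix.mul_apply]
    rw [Finset.sum_eq_single i]
    · intro k _ hk; rw [hA (Ne.symm hk), zero_mul]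
    · intro hi; exact absurd (Finset.mem_univ i) hi
  have h1 : A i i * B i i = 1 := by
    have := key i; rw [h, Matrix.one_apply_eq] at this; exact this.symm
  have h0 : A i i * B i j = 0 := by
    have := key j; rw [h, Matrix.one_apply_ne hij] at this; exact this.symm
  exact (mul_eq_zero.mp h0).resolve_left (left_ne_zero_of_mul_eq_one h1)

/-- The subgroup of diagonal matrices in `Sp(2n, F)`. -/
def diagSp (n : ℕ) (F : Type*) [Field F] :
    Subgroup ↥(Matrix.symplecticGroup (Fin n) F) where
  carrier := {g | (g : Matrix (Fin n ⊕ Fin n) (Fin n ⊕ Fin n) F).IsDiag}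
  one_mem' := Matrix.isDiag_one
  mul_mem' {a b} ha hb := isDiag_mul' ha hb
  inv_mem' {a} ha := by
    have h : (a : Matrix (Fin n ⊕ Fin n) (Fin n ⊕ Fin n) F) *
        ((a⁻¹ : _) : Matrix (Fin n ⊕ Fin n) (Fin n ⊕ Fin n) F) = 1 :=
      congrArg Subtype.val (mul_inv_cancel a)
    exact isDiag_of_mul_eq_one ha h

/-!
If `t = diag(w₁, …, w₂ₙ)` satisfies `g t g⁻¹ = t⁻¹`, then `t g t = g`, so `(wᵢ wⱼ - 1) gᵢⱼ = 0` for
all `i` and `j`. Varying one coordinate of the torus kills every entry of `g` except those at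
positions of opposite weights, so that `g = [[0, B], [C, 0]]` with `C` diagonal. The symplectic
relation then reads `C B = -1`, which is `g² = -1`.
-/

lemma orderOf_eq_four_of_sq_eq_neg_one {M : Type*} [Monoid M] [HasDistribNeg M] {a : M}
    (ha : a ^ 2 = -1) (hM : (-1 : M) ≠ 1) : orderOf a = 4 := by
  have ha_four : a ^ 2 ^ (1 + 1) = 1 := by
    rw [pow_succ, pow_one, pow_mul, ha, neg_one_sq]
  exact orderOf_eq_prime_pow (by rwa [pow_one, ha]) ha_four

lemma matrix_neg_one_ne_one {m R : Type*} [DecidableEq m] [Nonempty m] [Zero R] [One R] [Neg R]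
    (hR : (-1 : R) ≠ 1) : (-1 : Matrix m m R) ≠ 1 := by
  obtain ⟨i⟩ := ‹Nonempty m›
  exact fun h => hR (by simpa only [Matrix.neg_apply, one_apply_eq] using congrFun₂ h i i)

section BlockAntidiagonal

variable {l R : Type*} [Fintype l] [DecidableEq l] [CommRing R]

lemma fromBlocks_zero₁₁_zero₂₂_mem_symplecticGroup_iff {B C : Matrix l l R} :
    fromBlocks 0 B C 0 ∈ symplecticGroup l R ↔ Cᵀ * B = -1 := by
  simp [SymplecticGroup.fromBlocks_mem_iff, neg_eq_iff_eq_neg]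

lemma fromBlocks_zero₁₁_zero₂₂_sq_eq_neg_one {B C : Matrix l l R} (hC : C.IsSymm)
    (h : fromBlocks 0 B C 0 ∈ symplecticGroup l R) : fromBlocks 0 B C 0 ^ 2 = -1 := by
  have hCB : C * B = -1 := by
    rwa [fromBlocks_zero₁₁_zero₂₂_mem_symplecticGroup_iff, hC.eq] at h
  have hBC : B * C = -1 := by
    rw [← neg_eq_iff_eq_neg, ← neg_mul, mul_eq_one_comm, mul_neg, hCB, neg_neg]
  calc fromBlocks 0 B C 0 ^ 2 = fromBlocks (B * C) 0 0 (C * B) := by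
        simp [sq, fromBlocks_multiply]
    _ = -1 := by rw [hBC, hCB, ← fromBlocks_one, fromBlocks_neg, neg_zero]

lemma sq_eq_neg_one_of_apply_eq_zero_of_ne_swap {M : Matrix (l ⊕ l) (l ⊕ l) R}
    (hM : M ∈ symplecticGroup l R) (hzero : ∀ i j, j ≠ i.swap → M i j = 0) : M ^ 2 = -1 := by
  have h₁₁ : M.toBlocks₁₁ = 0 := by
    ext a b
    exact hzero _ _ Sum.inl_ne_inr
  have h₂₂ : M.toBlocks₂₂ = 0 := by
    ext a b
    exact hzero _ _ Sum.inr_ne_inl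
  have h₂₁ : M.toBlocks₂₁.IsDiag := fun a b hab =>
    hzero _ _ (Sum.inl_injective.ne hab.symm)
  have hblocks : M = fromBlocks 0 M.toBlocks₁₂ M.toBlocks₂₁ 0 := by
    conv_lhs => rw [← M.fromBlocks_toBlocks, h₁₁, h₂₂]
  rw [hblocks] at hM ⊢
  exact fromBlocks_zero₁₁_zero₂₂_sq_eq_neg_one h₂₁.isSymm hM

end BlockAntidiagonal

section TorusWeight

variable {l G : Type*} [Group G]

/-- The values `(d, d⁻¹)` of the weights of the standard representation of `Sp(2l)` at the point
`d` of the diagonal torus; `i` and `i.swap` index opposite weights. -/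
def torusWeight (d : l → G) : l ⊕ l → G :=
  Sum.elim d d⁻¹

lemma exists_torusWeight_eq_of_ne_swap {i j : l ⊕ l} (hij : j ≠ i.swap) (u : G) :
    ∃ d : l → G, torusWeight d i = u ∧ (torusWeight d j = 1 ∨ torusWeight d j = u) := by
  classical
  rcases i with a | a
  · refine ⟨Pi.mulSingle a u, by simp [torusWeight], ?_⟩
    rcases j with b | b
    · rcases eq_or_ne b a with rfl | hba <;> simp [torusWeight, *]
    · have hba : b ≠ a := by simpa using hij
      simp [torusWeight, hba]
  · refine ⟨Pi.mulSingle a u⁻¹, by simp [torusWeight], ?_⟩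
    rcases j with b | b
    · have hba : b ≠ a := by simpa using hij
      simp [torusWeight, hba]
    · rcases eq_or_ne b a with rfl | hba <;> simp [torusWeight, *]

end TorusWeight

section Torus

variable {l R : Type*} [Fintype l] [DecidableEq l] [CommRing R]

/-- The element of the split maximal torus of `Sp(2l, R)` with coordinates `d`. These are units, so
that the torus makes sense over every commutative ring. -/
def symplecticTorus (d : l → Rˣ) : symplecticGroup l R :=
  ⟨diagonal fun i => (torusWeight d i : Rˣ), by
    have hblocks : diagonal (fun i => ((torusWeight d i : Rˣ) : R)) =
        fromBlocks (diagonal fun a => (d a : R)) 0 0 (diagonal fun a => ((d a)⁻¹ : Rˣ)) := by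
      rw [fromBlocks_diagonal]
      congr 1
      ext (a | a) <;> rfl
    rw [hblocks, SymplecticGroup.fromBlocks_mem_iff]
    simp⟩

lemma torusWeight_mul_mul_apply {g : symplecticGroup l R} {d : l → Rˣ}
    (hg : g * symplecticTorus d * g⁻¹ = (symplecticTorus d)⁻¹) (i j : l ⊕ l) :
    ((torusWeight d i * torusWeight d j : Rˣ) : R) * (g : Matrix (l ⊕ l) (l ⊕ l) R) i j =
      (g : Matrix (l ⊕ l) (l ⊕ l) R) i j := by
  have htgt : symplecticTorus d * g * symplecticTorus d = g := by
    rw [mul_assoc, mul_inv_eq_iff_eq_mul.mp hg, mul_inv_cancel_left]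
  have hentry := congrFun₂ (congrArg Subtype.val htgt) i j
  simp only [Submonoid.coe_mul, symplecticTorus, mul_diagonal, diagonal_mul] at hentry
  rwa [Units.val_mul, mul_right_comm]

lemma apply_eq_zero_of_conj_symplecticTorus_eq_inv {u : Rˣ} (hu : IsRegular ((u : R) ^ 2 - 1))
    {g : symplecticGroup l R}
    (hg : ∀ d : l → Rˣ, g * symplecticTorus d * g⁻¹ = (symplecticTorus d)⁻¹)
    {i j : l ⊕ l} (hij : j ≠ i.swap) : (g : Matrix (l ⊕ l) (l ⊕ l) R) i j = 0 := by
  obtain ⟨d, hi, hj⟩ := exists_torusWeight_eq_of_ne_swap hij u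
  have hfix := torusWeight_mul_mul_apply (hg d) i j
  rw [← hu.left.mul_left_eq_zero_iff]
  rcases hj with hj | hj <;> rw [hi, hj] at hfix
  · rw [mul_one] at hfix
    linear_combination (u + 1 : R) * hfix
  · rw [Units.val_mul] at hfix
    linear_combination hfix

end Torus

theorem stmt_16_general {l R : Type*} [Fintype l] [DecidableEq l] [Nonempty l] [CommRing R]
    [Nontrivial R] {u : Rˣ} (hu : IsRegular ((u : R) ^ 2 - 1)) (g : symplecticGroup l R)
    (hg : ∀ d : l → Rˣ, g * symplecticTorus d * g⁻¹ = (symplecticTorus d)⁻¹) :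
    (↑(g ^ 2) : Matrix (l ⊕ l) (l ⊕ l) R) = -1 ∧ (ringChar R ≠ 2 → orderOf g = 4) := by
  have hsq : (g : Matrix (l ⊕ l) (l ⊕ l) R) ^ 2 = -1 :=
    sq_eq_neg_one_of_apply_eq_zero_of_ne_swap g.2 fun _ _ =>
      apply_eq_zero_of_conj_symplecticTorus_eq_inv hu hg
  refine ⟨hsq, fun hR => ?_⟩
  rw [← orderOf_submonoid]
  exact orderOf_eq_four_of_sq_eq_neg_one hsq
    (matrix_neg_one_ne_one (Ring.neg_one_ne_one_of_char_ne_two hR))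

section Field

variable {F : Type*} [Field F]

lemma symplecticTorus_mem_diagSp {n : ℕ} (d : Fin n → Fˣ) : symplecticTorus d ∈ diagSp n F :=
  isDiag_diagonal _

lemma exists_unit_isRegular_sq_sub_one [Infinite F] : ∃ u : Fˣ, IsRegular ((u : F) ^ 2 - 1) := by
  classical
  obtain ⟨x, hx⟩ := Infinite.exists_notMem_finset ({0, 1, -1} : Finset F)
  simp only [Finset.mem_insert, Finset.mem_singleton, not_or] at hx
  obtain ⟨h_zero, h_one, h_neg_one⟩ := hx
  exact ⟨Units.mk0 x h_zero,
    .of_ne_zero (sub_ne_zero.mpr (sq_ne_one_iff.mpr ⟨h_one, h_neg_one⟩))⟩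

end Field

/-- If `g ∈ Sp(2n,F)` (`F` infinite) conjugates every diagonal symplectic matrix to its
inverse, then `g ^ 2 = -1`; in particular, if `char F ≠ 2`, `g` has order `4`. -/
theorem stmt_16 (F : Type*) [Field F] [Infinite F] (n : ℕ) (hn : 1 ≤ n)
    (g : ↥(Matrix.symplecticGroup (Fin n) F))
    (hg : ∀ t ∈ diagSp n F, g * t * g⁻¹ = t⁻¹) :
    (↑(g ^ 2) : Matrix (Fin n ⊕ Fin n) (Fin n ⊕ Fin n) F) = -1 ∧
      (ringChar F ≠ 2 → orderOf g = 4) := by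
  have : NeZero n := ⟨Nat.one_le_iff_ne_zero.mp hn⟩
  obtain ⟨u, hu⟩ := exists_unit_isRegular_sq_sub_one (F := F)
  exact stmt_16_general hu g fun d => hg _ (symplecticTorus_mem_diagSp d)
end
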